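/- arXiv:1507.00323 — 2 statements merged into one kernel-verified Lean document; each statement's English description precedes it below -/
import Mathlib

section
/- Let Ω ⊆ ℂ be a bounded, open, simply connected set with 0 ∈ Ω, and let h : ℂ → ℂ be holomorphic and injective on the open unit disc B₁ with h(B₁) = Ω and h(0) = 0. Let v : ℂ → ℝ be continuously differentiable with compact support contained in B₁, and define u : Ω → ℝ by u(h(y)) = v(y) for y ∈ B₁ (i.e. u = v ∘ h⁻¹). Then the Dirichlet energy is conformally invariant: ∫_Ω ‖∇u(x)‖² dx = ∫_{B₁} ‖∇v(y)‖² dy. -/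
open Metric Complex MeasureTheory

/-!
The conformal energy `∫ ‖Du‖ ^ n` of a map on an `n`-dimensional space is invariant under conformal
changes of variables: where the derivative `A` of `h` is `c` times a linear isometry,
`‖Du ∘ A‖ ^ n = |c| ^ n * ‖Du‖ ^ n`, and the factor `|c| ^ n` is exactly the Jacobian `|det A|`.
The local inverse of `h` makes `u = v ∘ h⁻¹` differentiable there, so that `Dv = Du ∘ A`.
In the plane `n = 2`, which is the Dirichlet energy.

A holomorphic map is conformal wherever its derivative does not vanish. An injective one is nowhere
locally constant, so the zeros of its derivative are isolated and form a null set; that there are in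
fact none is a deeper fact which the integral does not see.
-/

open Filter Module Set Topology

section LinearAlgebra

variable {E : Type*} [NormedAddCommGroup E] [NormedSpace ℝ E] [FiniteDimensional ℝ E]

lemma abs_det_linearIsometryEquiv (e : E ≃ₗᵢ[ℝ] E) : |(e : E →L[ℝ] E).det| = 1 := by
  borelize E
  have hvol := Measure.addHaar_image_continuousLinearMap (Measure.addHaar : Measure E)
    (e : E →L[ℝ] E) (ball 0 1)
  have himage : (e : E →L[ℝ] E) '' ball 0 1 = ball 0 1 := by simp
  have hpos : Measure.addHaar (ball (0 : E) 1) ≠ 0 := (measure_ball_pos _ _ one_pos).ne'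
  rw [himage, eq_comm, ENNReal.mul_eq_right hpos measure_ball_lt_top.ne] at hvol
  exact ENNReal.ofReal_eq_one.mp hvol

lemma isConformalMap_exists_linearIsometryEquiv {A : E →L[ℝ] E} (hA : IsConformalMap A) :
    ∃ c ≠ (0 : ℝ), ∃ e : E ≃ₗᵢ[ℝ] E, A = c • (e : E →L[ℝ] E) := by
  obtain ⟨c, hc, li, rfl⟩ := hA
  exact ⟨c, hc, li.toLinearIsometryEquiv rfl, rfl⟩

lemma abs_det_smul_linearIsometryEquiv (c : ℝ) (e : E ≃ₗᵢ[ℝ] E) :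
    |(c • (e : E →L[ℝ] E)).det| = |c| ^ finrank ℝ E := by
  have hdet : (c • (e : E →L[ℝ] E)).det = c ^ finrank ℝ E * (e : E →L[ℝ] E).det :=
    LinearMap.det_smul c _
  rw [hdet, abs_mul, abs_det_linearIsometryEquiv, mul_one, abs_pow]

lemma isConformalMap_det_ne_zero {A : E →L[ℝ] E} (hA : IsConformalMap A) : A.det ≠ 0 := by
  obtain ⟨c, hc, e, rfl⟩ := isConformalMap_exists_linearIsometryEquiv hA
  rw [← abs_ne_zero, abs_det_smul_linearIsometryEquiv]
  exact pow_ne_zero _ (abs_ne_zero.mpr hc)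

lemma enorm_comp_isConformalMap_pow_finrank {F : Type*} [NormedAddCommGroup F] [NormedSpace ℝ F]
    (L : E →L[ℝ] F) {A : E →L[ℝ] E} (hA : IsConformalMap A) :
    ‖L ∘L A‖ₑ ^ finrank ℝ E = ENNReal.ofReal |A.det| * ‖L‖ₑ ^ finrank ℝ E := by
  obtain ⟨c, -, e, rfl⟩ := isConformalMap_exists_linearIsometryEquiv hA
  have hcomp : ‖L ∘L (e : E →L[ℝ] E)‖ₑ = ‖L‖ₑ := by
    simp only [enorm_eq_nnnorm, L.opNNNorm_comp_linearIsometryEquiv]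
  rw [abs_det_smul_linearIsometryEquiv, ContinuousLinearMap.comp_smul, enorm_smul, hcomp, mul_pow,
    ENNReal.ofReal_pow (abs_nonneg c), Real.enorm_eq_ofReal_abs]

end LinearAlgebra

section InverseFunction

variable {𝕜 E F G : Type*} [NontriviallyNormedField 𝕜]
  [NormedAddCommGroup E] [NormedSpace 𝕜 E] [CompleteSpace E]
  [NormedAddCommGroup F] [NormedSpace 𝕜 F] [NormedAddCommGroup G] [NormedSpace 𝕜 G]

lemma hasFDerivAt_of_comp_eventuallyEq {h : E → F} {A : E ≃L[𝕜] F} {y : E} {u : F → G} {v : E → G}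
    {v' : E →L[𝕜] G} (hh : HasStrictFDerivAt h (A : E →L[𝕜] F) y) (hv : HasFDerivAt v v' y)
    (huv : u ∘ h =ᶠ[𝓝 y] v) : HasFDerivAt u (v' ∘L (A.symm : F →L[𝕜] E)) (h y) := by
  let g := hh.localInverse h A y
  have hgy : g (h y) = y := hh.localInverse_apply_image
  have hu : u =ᶠ[𝓝 (h y)] v ∘ g := by
    filter_upwards [hh.eventually_right_inverse, hh.localInverse_tendsto.eventually huv]
      with x hinv hx
    rwa [Function.comp_apply, hinv] at hx
  rw [← hgy] at hv
  exact (hv.comp (h y) hh.to_localInverse.hasFDerivAt).congr_of_eventuallyEq hu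

end InverseFunction

section ConformalEnergy

variable {E F : Type*} [NormedAddCommGroup E] [NormedSpace ℝ E] [FiniteDimensional ℝ E]
  [NormedAddCommGroup F] [NormedSpace ℝ F]

lemma enorm_fderiv_pow_finrank_of_comp_eventuallyEq {h : E → E} {y : E} {u v : E → F}
    (hh : ContDiffAt ℝ 1 h y) (hconf : ConformalAt h y) (hv : DifferentiableAt ℝ v y)
    (huv : u ∘ h =ᶠ[𝓝 y] v) :
    ‖fderiv ℝ v y‖ₑ ^ finrank ℝ E =
      ENNReal.ofReal |(fderiv ℝ h y).det| * ‖fderiv ℝ u (h y)‖ₑ ^ finrank ℝ E := by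
  have hA : IsConformalMap (fderiv ℝ h y) := conformalAt_iff_isConformalMap_fderiv.mp hconf
  let A := (fderiv ℝ h y).toContinuousLinearEquivOfDetNeZero (isConformalMap_det_ne_zero hA)
  have hstrict : HasStrictFDerivAt h (A : E →L[ℝ] E) y := hh.hasStrictFDerivAt one_ne_zero
  have hu : DifferentiableAt ℝ u (h y) :=
    (hasFDerivAt_of_comp_eventuallyEq hstrict hv.hasFDerivAt huv).differentiableAt
  rw [← huv.fderiv_eq, fderiv_comp y hu hconf.differentiableAt,
    enorm_comp_isConformalMap_pow_finrank _ hA]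

theorem lintegral_image_enorm_fderiv_pow_finrank [MeasurableSpace E] [BorelSpace E]
    (μ : Measure E) [μ.IsAddHaarMeasure] {U : Set E} (hU : IsOpen U) {h : E → E}
    (hh : ContDiffOn ℝ 1 h U) (hinj : InjOn h U) (hconf : ∀ᵐ y ∂μ.restrict U, ConformalAt h y)
    {u v : E → F} (hv : ∀ᵐ y ∂μ.restrict U, DifferentiableAt ℝ v y) (huv : EqOn (u ∘ h) v U) :
    ∫⁻ x in h '' U, ‖fderiv ℝ u x‖ₑ ^ finrank ℝ E ∂μ =
      ∫⁻ y in U, ‖fderiv ℝ v y‖ₑ ^ finrank ℝ E ∂μ := by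
  have hderiv : ∀ y ∈ U, HasFDerivWithinAt h (fderiv ℝ h y) U y := fun y hy =>
    ((hh.contDiffAt (hU.mem_nhds hy)).differentiableAt one_ne_zero).hasFDerivAt.hasFDerivWithinAt
  rw [lintegral_image_eq_lintegral_abs_det_fderiv_mul μ hU.measurableSet hderiv hinj]
  refine lintegral_congr_ae ?_
  filter_upwards [hconf, hv, ae_restrict_mem hU.measurableSet] with y hconf_y hv_y hy
  have hnhds := hU.mem_nhds hy
  exact (enorm_fderiv_pow_finrank_of_comp_eventuallyEq (hh.contDiffAt hnhds) hconf_y hv_y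
    (huv.eventuallyEq_of_mem hnhds)).symm

end ConformalEnergy

lemma frequently_deriv_ne_zero_of_injOn {𝕜 F : Type*} [RCLike 𝕜] [NormedAddCommGroup F]
    [NormedSpace 𝕜 F] {U : Set 𝕜} (hU : IsOpen U) {h : 𝕜 → F} (hh : DifferentiableOn 𝕜 h U)
    (hinj : InjOn h U) {z : 𝕜} (hz : z ∈ U) : ∃ᶠ y in 𝓝 z, deriv h y ≠ 0 := by
  intro hzero
  simp only [not_not] at hzero
  obtain ⟨r, hr, hball⟩ := eventually_nhds_iff_ball.mp (hzero.and (hU.mem_nhds hz))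
  have hconst : ∀ y ∈ ball z r, h y = h z := fun y hy =>
    isOpen_ball.is_const_of_deriv_eq_zero (convex_ball z r).isPreconnected
      (hh.mono fun x hx => (hball x hx).2) (fun x hx => (hball x hx).1) hy (mem_ball_self hr)
  obtain ⟨w, hw, hwz⟩ : ∃ w ∈ ball z r, w ≠ z :=
    ((eventually_nhdsWithin_of_eventually_nhds (ball_mem_nhds z hr)).and
      eventually_mem_nhdsWithin).exists (f := 𝓝[≠] z)
  exact hwz (hinj (hball w hw).2 hz (hconst w hw))

lemma ae_deriv_ne_zero_of_injOn {F : Type*} [NormedAddCommGroup F] [NormedSpace ℂ F]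
    [CompleteSpace F] (μ : Measure ℂ) [NullSingletonClass μ] {U : Set ℂ} (hU : IsOpen U)
    {h : ℂ → F} (hh : DifferentiableOn ℂ h U) (hinj : InjOn h U) :
    ∀ᵐ z ∂μ.restrict U, deriv h z ≠ 0 := by
  refine ae_restrict_le_codiscreteWithin hU.measurableSet ?_
  rw [mem_codiscreteWithin_iff_forall_mem_nhdsNE]
  intro z hz
  have hisolated : ∀ᶠ y in 𝓝[≠] z, deriv h y ≠ 0 :=
    (hh.analyticOnNhd hU z hz).deriv.eventually_eq_zero_or_eventually_ne_zero.resolve_left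
      fun hzero =>
        frequently_deriv_ne_zero_of_injOn hU hh hinj hz (hzero.mono fun _ => not_not_intro)
  exact mem_of_superset hisolated subset_union_left

lemma integral_norm_fderiv_pow_eq_toReal_lintegral {𝕜 E F : Type*} [NontriviallyNormedField 𝕜]
    [NormedAddCommGroup E] [NormedSpace 𝕜 E] [MeasurableSpace E] [OpensMeasurableSpace E]
    [NormedAddCommGroup F] [NormedSpace 𝕜 F] [CompleteSpace F] (μ : Measure E) (u : E → F) (n : ℕ) :
    ∫ x, ‖fderiv 𝕜 u x‖ ^ n ∂μ = (∫⁻ x, ‖fderiv 𝕜 u x‖ₑ ^ n ∂μ).toReal := by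
  have hmeas : AEMeasurable (fun x => ‖fderiv 𝕜 u x‖ₑ ^ n) μ :=
    ((measurable_fderiv 𝕜 u).enorm.pow_const n).aemeasurable
  rw [← integral_toReal hmeas (.of_forall fun x => ENNReal.pow_lt_top enorm_lt_top)]
  simp only [ENNReal.toReal_pow, toReal_enorm]

theorem dirichlet_energy_conformal_invariance_general {F : Type*} [NormedAddCommGroup F]
    [NormedSpace ℝ F] {U : Set ℂ} (hU : IsOpen U) {h : ℂ → ℂ} (hh : DifferentiableOn ℂ h U)
    (hinj : InjOn h U) {u v : ℂ → F} (hv : ∀ᵐ y ∂volume.restrict U, DifferentiableAt ℝ v y)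
    (huv : EqOn (u ∘ h) v U) :
    ∫⁻ x in h '' U, ‖fderiv ℝ u x‖ₑ ^ 2 = ∫⁻ y in U, ‖fderiv ℝ v y‖ₑ ^ 2 := by
  have hconf : ∀ᵐ y ∂volume.restrict U, ConformalAt h y := by
    filter_upwards [ae_deriv_ne_zero_of_injOn volume hU hh hinj, ae_restrict_mem hU.measurableSet]
      with y hne hy
    exact (hh.differentiableAt (hU.mem_nhds hy)).conformalAt hne
  have hC1 : ContDiffOn ℝ 1 h U := (hh.contDiffOn hU).restrict_scalars ℝ
  simpa only [finrank_real_complex] using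
    lintegral_image_enorm_fderiv_pow_finrank volume hU hC1 hinj hconf hv huv

/-- Conformal invariance of the Dirichlet energy: if `h` maps the unit disc
conformally onto `Ω` with `h 0 = 0`, `v` is a `C¹` function with compact support
in the disc, and `u = v ∘ h⁻¹` on `Ω`, then `∫_Ω ‖∇u‖² = ∫_{B₁} ‖∇v‖²`. -/
theorem dirichlet_energy_conformal_invariance
    (Ω : Set ℂ) (hΩopen : IsOpen Ω) (hΩbdd : Bornology.IsBounded Ω)
    (hΩsc : SimplyConnectedSpace Ω) (h0Ω : (0 : ℂ) ∈ Ω)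
    (h : ℂ → ℂ)
    (hhol : DifferentiableOn ℂ h (ball (0 : ℂ) 1))
    (hinj : Set.InjOn h (ball (0 : ℂ) 1))
    (himage : h '' ball (0 : ℂ) 1 = Ω)
    (h0 : h 0 = 0)
    (v : ℂ → ℝ) (hv : ContDiff ℝ 1 v) (hvcpt : HasCompactSupport v)
    (hvsupp : tsupport v ⊆ ball (0 : ℂ) 1)
    (u : ℂ → ℝ) (hu : ∀ y ∈ ball (0 : ℂ) 1, u (h y) = v y) :
    ∫ x in Ω, ‖fderiv ℝ u x‖ ^ 2 = ∫ y in ball (0 : ℂ) 1, ‖fderiv ℝ v y‖ ^ 2 := by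
  rw [integral_norm_fderiv_pow_eq_toReal_lintegral, integral_norm_fderiv_pow_eq_toReal_lintegral,
    ← himage, dirichlet_energy_conformal_invariance_general isOpen_ball hhol hinj
      (.of_forall (hv.differentiable one_ne_zero)) hu]
end

section
/- Let U ⊆ ℂ be a bounded open set and let {u_i} be a sequence of admissible test functions on U that concentrates at some point x ∈ closure(U). Then u_i → 0 in L²(U), i.e. lim_{i→∞} ∫_U u_i(y)² dy = 0. -/
/-!
The Sobolev inequality bounds `‖u‖_{p*}` by a multiple of `‖∇u‖_p` for every `p` below the
dimension; in the plane, `p = 1` gives `p* = 2`. It therefore suffices that `∇u i → 0` in `L^p`,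
and this holds whenever `p` is smaller than the exponent `q` of the energy: by Hölder's inequality,
the `L^p` norm of the gradient on a ball around the concentration point is at most its `L^q` norm
times a positive power of the measure of the ball, which is small with the radius uniformly in `i`,
while off the ball the `L^p` norm is controlled by the energy there, which tends to `0`.
-/

open Metric Complex MeasureTheory Filter

/-- A test function on `U`: `C¹` with compact support contained in `U`. -/
def IsTestFun (U : Set ℂ) (u : ℂ → ℝ) : Prop :=
  ContDiff ℝ 1 u ∧ HasCompactSupport u ∧ tsupport u ⊆ U

/-- The Dirichlet energy of `u` on `U`. -/
noncomputable def dirEnergy (U : Set ℂ) (u : ℂ → ℝ) : ℝ :=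
  ∫ x in U, ‖fderiv ℝ u x‖ ^ 2

/-- An admissible test function on `U`: a test function with Dirichlet energy at most 1. -/
def IsAdmissible (U : Set ℂ) (u : ℂ → ℝ) : Prop :=
  IsTestFun U u ∧ dirEnergy U u ≤ 1

/-- The sequence `u i` concentrates at `x ∈ closure U`. -/
def Concentrates (U : Set ℂ) (x : ℂ) (u : ℕ → ℂ → ℝ) : Prop :=
  Tendsto (fun i => dirEnergy U (u i)) atTop (nhds 1) ∧
  ∀ ε > (0 : ℝ), Tendsto (fun i => dirEnergy (U \ ball x ε) (u i)) atTop (nhds 0)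

open scoped ENNReal NNReal Topology

section Lp

variable {α ι F : Type*} [NormedAddCommGroup F] {l : Filter ι}

theorem eLpNorm_eq_ofReal_integral_norm_rpow [MeasurableSpace α] {μ : Measure α} {f : α → F}
    {p : ℝ≥0} (hp : p ≠ 0) (hf : MemLp f p μ) :
    eLpNorm f p μ = ENNReal.ofReal ((∫ a, ‖f a‖ ^ (p : ℝ) ∂μ) ^ (p : ℝ)⁻¹) :=
  hf.eLpNorm_eq_integral_rpow_norm (ENNReal.coe_ne_zero.2 hp) ENNReal.coe_ne_top

theorem tendsto_eLpNorm_zero_iff_tendsto_integral_norm_rpow [MeasurableSpace α] {μ : Measure α}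
    {f : ι → α → F} {p : ℝ≥0} (hp : p ≠ 0) (hf : ∀ i, MemLp (f i) p μ) :
    Tendsto (fun i => eLpNorm (f i) p μ) l (𝓝 0) ↔
      Tendsto (fun i => ∫ a, ‖f i a‖ ^ (p : ℝ) ∂μ) l (𝓝 0) := by
  have hp' : (p : ℝ) ≠ 0 := NNReal.coe_ne_zero.2 hp
  have hnonneg (i : ι) : 0 ≤ ∫ a, ‖f i a‖ ^ (p : ℝ) ∂μ := integral_nonneg fun a => by positivity
  simp only [eLpNorm_eq_ofReal_integral_norm_rpow hp (hf _)]
  constructor <;> intro h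
  · have hpow := ((ENNReal.tendsto_toReal ENNReal.zero_ne_top).comp h).rpow_const
      (p := p) (Or.inr p.coe_nonneg)
    simpa [Function.comp_def, ENNReal.toReal_ofReal, Real.rpow_nonneg, hnonneg,
      Real.rpow_inv_rpow (hnonneg _) hp', hp'] using hpow
  · have hroot := h.rpow_const (p := (p : ℝ)⁻¹) (Or.inr (by positivity))
    simpa [hp'] using ENNReal.tendsto_ofReal hroot

theorem eLpNorm_le_restrict_mul_rpow_add_restrict_compl_mul_rpow [MeasurableSpace α]
    {μ : Measure α} {f : α → F} (hf : AEStronglyMeasurable f μ) {p q : ℝ≥0∞} (hp : 1 ≤ p)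
    (hpq : p ≤ q) {s : Set α} (hs : MeasurableSet s) :
    eLpNorm f p μ ≤
      eLpNorm f q (μ.restrict s) * μ s ^ (1 / p.toReal - 1 / q.toReal) +
        eLpNorm f q (μ.restrict sᶜ) * μ sᶜ ^ (1 / p.toReal - 1 / q.toReal) := by
  have hHolder (t : Set α) : eLpNorm f p (μ.restrict t) ≤
      eLpNorm f q (μ.restrict t) * μ t ^ (1 / p.toReal - 1 / q.toReal) := by
    simpa using eLpNorm_le_eLpNorm_mul_rpow_measure_univ hpq (hf.restrict (s := t))
  calc eLpNorm f p μ
      = eLpNorm (s.indicator f + sᶜ.indicator f) p μ := by rw [Set.indicator_self_add_compl]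
    _ ≤ eLpNorm (s.indicator f) p μ + eLpNorm (sᶜ.indicator f) p μ :=
        eLpNorm_add_le (hf.indicator hs) (hf.indicator hs.compl) hp
    _ = eLpNorm f p (μ.restrict s) + eLpNorm f p (μ.restrict sᶜ) := by
        rw [eLpNorm_indicator_eq_eLpNorm_restrict hs,
          eLpNorm_indicator_eq_eLpNorm_restrict hs.compl]
    _ ≤ _ := add_le_add (hHolder s) (hHolder sᶜ)

theorem one_div_toReal_sub_one_div_toReal_pos {p q : ℝ≥0∞} (hp : p ≠ 0) (hpq : p < q) :
    0 < 1 / p.toReal - 1 / q.toReal := by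
  have hp_pos : 0 < p.toReal := ENNReal.toReal_pos hp hpq.ne_top
  rcases eq_or_ne q ∞ with rfl | hq
  · simpa using hp_pos
  · exact sub_pos.2 (one_div_lt_one_div_of_lt hp_pos (ENNReal.toReal_strict_mono hq hpq))

theorem tendsto_measure_ball_nhdsGT_zero [MetricSpace α] [MeasurableSpace α]
    [OpensMeasurableSpace α] (μ : Measure α) [IsLocallyFiniteMeasure μ] (x : α) :
    Tendsto (fun ε => μ (ball x ε)) (𝓝[>] 0) (𝓝 (μ {x})) := by
  obtain ⟨s, hs, hs_fin⟩ := μ.finiteAt_nhds x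
  obtain ⟨R, hR, hball⟩ := Metric.mem_nhds_iff.1 hs
  have hfin : μ (ball x R) ≠ ∞ := measure_ne_top_of_subset hball hs_fin.ne
  simp only [← thickening_singleton] at hfin ⊢
  exact tendsto_measure_thickening_of_isClosed ⟨R, hR, hfin⟩ isClosed_singleton

theorem tendsto_eLpNorm_zero_of_tendsto_eLpNorm_restrict_compl_ball [MetricSpace α]
    [MeasurableSpace α] [OpensMeasurableSpace α] {μ : Measure α} [IsFiniteMeasure μ] {x : α}
    (hx : μ {x} = 0) {f : ι → α → F} (hf : ∀ i, AEStronglyMeasurable (f i) μ) {p q : ℝ≥0∞}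
    (hp : 1 ≤ p) (hpq : p < q) {C : ℝ≥0∞} (hC : C ≠ ∞) (hbdd : ∀ i, eLpNorm (f i) q μ ≤ C)
    (hconc : ∀ ε > 0, Tendsto (fun i => eLpNorm (f i) q (μ.restrict (ball x ε)ᶜ)) l (𝓝 0)) :
    Tendsto (fun i => eLpNorm (f i) p μ) l (𝓝 0) := by
  set θ : ℝ := 1 / p.toReal - 1 / q.toReal
  have hθ : 0 < θ := one_div_toReal_sub_one_div_toReal_pos (one_pos.trans_le hp).ne' hpq
  have hball : Tendsto (fun ε => C * μ (ball x ε) ^ θ) (𝓝[>] 0) (𝓝 0) := by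
    have hmeasure := hx ▸ tendsto_measure_ball_nhdsGT_zero μ x
    simpa [hθ] using ENNReal.Tendsto.const_mul (hmeasure.ennrpow_const θ) (Or.inr hC)
  refine ENNReal.tendsto_nhds_zero.2 fun δ hδ => ?_
  have hδ2 : 0 < δ / 2 := ENNReal.half_pos hδ.ne'
  obtain ⟨ε, hε_ball, hε⟩ : ∃ ε, C * μ (ball x ε) ^ θ ≤ δ / 2 ∧ 0 < ε :=
    ((ENNReal.tendsto_nhds_zero.1 hball _ hδ2).and self_mem_nhdsWithin).exists
  have hcompl : Tendsto
      (fun i => eLpNorm (f i) q (μ.restrict (ball x ε)ᶜ) * μ (ball x ε)ᶜ ^ θ) l (𝓝 0) := by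
    simpa using ENNReal.Tendsto.mul_const (hconc ε hε)
      (Or.inr (ENNReal.rpow_ne_top_of_nonneg hθ.le (measure_ne_top μ _)))
  filter_upwards [ENNReal.tendsto_nhds_zero.1 hcompl _ hδ2] with i hi
  calc eLpNorm (f i) p μ
      ≤ eLpNorm (f i) q (μ.restrict (ball x ε)) * μ (ball x ε) ^ θ +
          eLpNorm (f i) q (μ.restrict (ball x ε)ᶜ) * μ (ball x ε)ᶜ ^ θ :=
        eLpNorm_le_restrict_mul_rpow_add_restrict_compl_mul_rpow (hf i) hp hpq.le measurableSet_ball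
    _ ≤ C * μ (ball x ε) ^ θ + δ / 2 := by
        gcongr
        exact (eLpNorm_mono_measure _ Measure.restrict_le_self).trans (hbdd i)
    _ ≤ δ / 2 + δ / 2 := by gcongr
    _ = δ := ENNReal.add_halves δ

theorem tendsto_eLpNorm_restrict_zero_of_tendsto_setIntegral_sdiff_ball [MetricSpace α]
    [MeasurableSpace α] [OpensMeasurableSpace α] {μ : Measure α} {U : Set α} (hU : μ U ≠ ∞) {x : α}
    (hx : μ {x} = 0) {f : ι → α → F} {p q : ℝ≥0} (hp : 1 ≤ p) (hpq : p < q)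
    (hf : ∀ i, MemLp (f i) q (μ.restrict U)) {C : ℝ}
    (hbdd : ∀ i, ∫ y in U, ‖f i y‖ ^ (q : ℝ) ∂μ ≤ C)
    (hconc : ∀ ε > 0, Tendsto (fun i => ∫ y in U \ ball x ε, ‖f i y‖ ^ (q : ℝ) ∂μ) l (𝓝 0)) :
    Tendsto (fun i => eLpNorm (f i) p (μ.restrict U)) l (𝓝 0) := by
  have hq : q ≠ 0 := hpq.ne_bot
  have : IsFiniteMeasure (μ.restrict U) := isFiniteMeasure_restrict.2 hU
  have hbdd_eLpNorm (i : ι) :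
      eLpNorm (f i) q (μ.restrict U) ≤ ENNReal.ofReal (C ^ (q : ℝ)⁻¹) := by
    rw [eLpNorm_eq_ofReal_integral_norm_rpow hq (hf i)]
    gcongr
    exact hbdd i
  refine tendsto_eLpNorm_zero_of_tendsto_eLpNorm_restrict_compl_ball
    (Measure.restrict_le_self.absolutelyContinuous hx) (fun i => (hf i).aestronglyMeasurable)
    (by exact_mod_cast hp) (by exact_mod_cast hpq) ENNReal.ofReal_ne_top hbdd_eLpNorm fun ε hε => ?_
  rw [Measure.restrict_restrict measurableSet_ball.compl, Set.inter_comm, ← Set.sdiff_eq]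
  exact (tendsto_eLpNorm_zero_iff_tendsto_integral_norm_rpow hq fun i =>
    (hf i).mono_measure (Measure.restrict_mono_set μ Set.sdiff_subset)).2 (hconc ε hε)

end Lp

section Sobolev

variable {E F ι : Type*} [NormedAddCommGroup E] [NormedSpace ℝ E] [FiniteDimensional ℝ E]
  [MeasurableSpace E] [BorelSpace E] [NormedAddCommGroup F] [NormedSpace ℝ F]
  [FiniteDimensional ℝ F] {μ : Measure E} [μ.IsAddHaarMeasure]

open Module (finrank)

variable (μ) in
theorem eLpNorm_restrict_le_eLpNorm_restrict_fderiv_of_eq {U : Set E} {u : E → F}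
    (hu : ContDiff ℝ 1 u) (hu_compact : HasCompactSupport u) (hu_supp : tsupport u ⊆ U)
    {p r : ℝ≥0} (hp : 1 ≤ p) (hE : 0 < finrank ℝ E)
    (hr : (r : ℝ)⁻¹ = (p : ℝ)⁻¹ - (finrank ℝ E : ℝ)⁻¹) :
    eLpNorm u r (μ.restrict U) ≤
      SNormLESNormFDerivOfEqConst F μ p * eLpNorm (fderiv ℝ u) p (μ.restrict U) := by
  have hgrad : eLpNorm (fderiv ℝ u) p (μ.restrict U) = eLpNorm (fderiv ℝ u) p μ :=
    eLpNorm_restrict_eq_of_support_subset (ε := E →L[ℝ] F)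
      ((support_fderiv_subset ℝ).trans hu_supp)
  rw [hgrad]
  exact (eLpNorm_mono_measure u Measure.restrict_le_self).trans
    (eLpNorm_le_eLpNorm_fderiv_of_eq μ hu hu_compact hp hE hr)

theorem concentrating_tendsto_zero_L2_general {U : Set E} (hU : μ U ≠ ∞) (x : E) {p q r : ℝ≥0}
    (hp : 1 ≤ p) (hpq : p < q) (hpE : p < finrank ℝ E)
    (hr : (r : ℝ)⁻¹ = (p : ℝ)⁻¹ - (finrank ℝ E : ℝ)⁻¹) {l : Filter ι} {u : ι → E → F}
    (hu : ∀ i, ContDiff ℝ 1 (u i)) (hu_compact : ∀ i, HasCompactSupport (u i))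
    (hu_supp : ∀ i, tsupport (u i) ⊆ U) {C : ℝ}
    (hbdd : ∀ i, ∫ y in U, ‖fderiv ℝ (u i) y‖ ^ (q : ℝ) ∂μ ≤ C)
    (hconc : ∀ ε > 0,
      Tendsto (fun i => ∫ y in U \ ball x ε, ‖fderiv ℝ (u i) y‖ ^ (q : ℝ) ∂μ) l (𝓝 0)) :
    Tendsto (fun i => ∫ y in U, ‖u i y‖ ^ (r : ℝ) ∂μ) l (𝓝 0) := by
  have hp_pos : 0 < p := one_pos.trans_le hp
  have hE : 0 < finrank ℝ E := by exact_mod_cast hp_pos.trans hpE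
  have := Module.nontrivial_of_finrank_pos hE
  have hr_inv_pos : (0 : ℝ) < (r : ℝ)⁻¹ :=
    hr ▸ sub_pos.2 (inv_strictAnti₀ (by exact_mod_cast hp_pos) (by exact_mod_cast hpE))
  have hr_ne : r ≠ 0 := by simpa using hr_inv_pos.ne'
  have hgrad : Tendsto (fun i => eLpNorm (fderiv ℝ (u i)) p (μ.restrict U)) l (𝓝 0) :=
    tendsto_eLpNorm_restrict_zero_of_tendsto_setIntegral_sdiff_ball hU (measure_singleton x) hp hpq
      (fun i => (((hu i).continuous_fderiv one_ne_zero).memLp_of_hasCompactSupport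
        ((hu_compact i).fderiv ℝ)).restrict U) hbdd hconc
  have hbound : Tendsto (fun i => SNormLESNormFDerivOfEqConst F μ p *
      eLpNorm (fderiv ℝ (u i)) p (μ.restrict U)) l (𝓝 0) := by
    simpa using ENNReal.Tendsto.const_mul hgrad (Or.inr ENNReal.coe_ne_top)
  rw [← tendsto_eLpNorm_zero_iff_tendsto_integral_norm_rpow hr_ne fun i =>
    ((hu i).continuous.memLp_of_hasCompactSupport (hu_compact i)).restrict U]
  exact tendsto_of_tendsto_of_tendsto_of_le_of_le tendsto_const_nhds hbound (fun _ => zero_le)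
    fun i => eLpNorm_restrict_le_eLpNorm_restrict_fderiv_of_eq μ (hu i) (hu_compact i) (hu_supp i)
      hp hE hr

end Sobolev

/-- A concentrating sequence converges to `0` in `L²(U)`. -/
theorem concentrating_tendsto_zero_L2
    (U : Set ℂ) (hUopen : IsOpen U) (hUbdd : Bornology.IsBounded U)
    (x : ℂ) (hx : x ∈ closure U)
    (u : ℕ → ℂ → ℝ)
    (hadm : ∀ i, IsAdmissible U (u i))
    (hconc : Concentrates U x u) :
    Tendsto (fun i => ∫ y in U, u i y ^ 2) atTop (nhds 0) := by
  simpa using concentrating_tendsto_zero_L2_general (p := 1) (q := 2) (r := 2)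
    hUbdd.measure_lt_top.ne x le_rfl (by norm_num) (by norm_num) (by norm_num)
    (fun i => (hadm i).1.1) (fun i => (hadm i).1.2.1) (fun i => (hadm i).1.2.2)
    (C := 1) (by simpa [dirEnergy] using fun i => (hadm i).2)
    (by simpa [dirEnergy] using hconc.2)
end
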